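/- Let m be a positive integer, m' > 0, α > 0, and let γ > 0 satisfy m α γ < m'. Define O_{N,N}(β) = ∫₀^∞ f_G(x, m') (∫₀^{βx} f_G(y, m) dy) dx for β > 0. Then ∫₀^γ O_{N,N}(α t) dt = γ − (m'^{m'} / Γ(m')) Σ_{k=0}^{m−1} (Γ(k+m') (m α)^k γ^{k+1} / ((k+1)! · m'^{k+m'})) · ₂F₁(k+1, k+m'; k+2; −m α γ / m'), where ₂F₁(a, b; c; z) = Σ_{n=0}^∞ ((a)_n (b)_n / (c)_n) z^n / n! is the Gauss hypergeometric series (convergent since |−mαγ/m'| < 1) and (q)_n denotes the Pochhammer symbol. -/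

import Mathlib

open Real MeasureTheory intervalIntegral

/-- Unit-mean Nakagami-m (Gamma) density with shape parameter `s`. -/
noncomputable def fG (s x : ℝ) : ℝ :=
  if 0 < x then s ^ s * x ^ (s - 1) * Real.exp (-s * x) / Real.Gamma s else 0

/-- Outage probability `O_{N,N}(β)`: probability that a unit-mean Gamma variable of shape `m`
is less than `β` times an independent unit-mean Gamma variable of shape `m'`. -/
noncomputable def O_NN (m : ℕ) (m' : ℝ) (β : ℝ) : ℝ :=
  ∫ x in Set.Ioi (0 : ℝ), fG m' x * ∫ y in Set.Ioo 0 (β * x), fG (m : ℝ) y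

/-- The Gauss hypergeometric series `₂F₁(a, b; c; z)` (with Pochhammer symbols). -/
noncomputable def hyp2F1 (a b c z : ℝ) : ℝ :=
  ∑' n : ℕ,
    ((ascPochhammer ℝ n).eval a * (ascPochhammer ℝ n).eval b /
        (ascPochhammer ℝ n).eval c) * z ^ n / (Nat.factorial n : ℝ)

lemma poch_ratio (a : ℝ) (n : ℕ) :
    (ascPochhammer ℝ n).eval (a + 1) * (a + 1 + n) = (a + 1) * (ascPochhammer ℝ n).eval (a + 2) := by
  induction n with
  | zero => simp
  | succ n ih =>
    rw [ascPochhammer_succ_eval, ascPochhammer_succ_eval]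
    push_cast
    linear_combination (a + 2 + n) * ih

lemma hasSum_binom (b x : ℝ) (hx : |x| < 1) :
    HasSum (fun n : ℕ => (ascPochhammer ℝ n).eval b / (Nat.factorial n : ℝ) * x ^ n)
      (1 / (1 - x) ^ b) := by
  have h := (Real.one_div_one_sub_rpow_hasFPowerSeriesOnBall_zero b).hasSum (y := x)
    (by simpa [enorm_eq_nnnorm] using! hx)
  simp only [zero_add, FormalMultilinearSeries.ofScalars_apply_eq] at h
  convert! h using 2 with n
  rw [← Ring.multichoose_eq, smul_eq_mul]
  congr 1
  have := Ring.factorial_nsmul_multichoose_eq_ascPochhammer b n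
  rw [Polynomial.ascPochhammer_smeval_eq_eval] at this
  rw [← this, nsmul_eq_mul]
  field_simp

lemma integral_hyp (k : ℕ) (b c γ : ℝ) (hb : 0 < b) (hc : 0 < c) (hγ : 0 < γ) (h : c * γ < 1) :
    ∫ t in (0:ℝ)..γ, t ^ k * (1 / (1 + c * t) ^ b) =
      γ ^ (k + 1) / (k + 1) * hyp2F1 ((k : ℝ) + 1) b ((k : ℝ) + 2) (-(c * γ)) := by
  have key : HasSum (fun n : ℕ => ∫ t in (0:ℝ)..γ,
      t ^ k * ((ascPochhammer ℝ n).eval b / (Nat.factorial n : ℝ) * (-(c * t)) ^ n))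
      (∫ t in (0:ℝ)..γ, t ^ k * (1 / (1 + c * t) ^ b)) := by
    have hs := (hasSum_binom b (c * γ) (by rw [abs_of_pos (by positivity)]; exact h)).summable.mul_left (γ ^ k)
    refine intervalIntegral.hasSum_integral_of_dominated_convergence
      (fun n _ => γ ^ k * ((ascPochhammer ℝ n).eval b / (Nat.factorial n : ℝ) * (c * γ) ^ n))
      ?_ ?_ ?_ ?_ ?_
    · intro n
      exact (by fun_prop : Continuous _).aestronglyMeasurable
    · intro n
      refine Filter.Eventually.of_forall fun t ht => ?_
      rw [Set.uIoc_of_le hγ.le] at ht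
      have := ascPochhammer_pos n b hb
      have ht0 := ht.1
      have ht1 := ht.2
      rw [norm_mul, norm_mul, norm_pow, norm_pow, norm_neg, Real.norm_of_nonneg ht0.le,
        Real.norm_of_nonneg (by positivity : 0 ≤ c * t), Real.norm_of_nonneg (by positivity)]
      gcongr
    · exact Filter.Eventually.of_forall fun t ht => hs
    · exact intervalIntegrable_const
    · refine Filter.Eventually.of_forall fun t ht => ?_
      rw [Set.uIoc_of_le hγ.le] at ht
      have ht0 := ht.1
      have ht1 : c * t ≤ c * γ := by gcongr; exact ht.2
      have := (hasSum_binom b (-(c * t)) (by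
        rw [abs_neg, abs_of_pos (by positivity)]; linarith)).mul_left (t ^ k)
      simpa only [sub_neg_eq_add] using this
  rw [← key.tsum_eq, hyp2F1, ← tsum_mul_left]
  refine tsum_congr fun n => ?_
  have e : ∀ t : ℝ, t ^ k * ((ascPochhammer ℝ n).eval b / (Nat.factorial n : ℝ) * (-(c * t)) ^ n)
      = ((ascPochhammer ℝ n).eval b / (Nat.factorial n : ℝ) * (-c) ^ n) * t ^ (k + n) := by
    intro t; rw [pow_add, ← neg_mul, mul_pow]; ring
  simp only [e]
  rw [intervalIntegral.integral_const_mul, integral_pow]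
  have h1 := poch_ratio k n
  have h2 := ascPochhammer_pos n ((k:ℝ) + 2) (by positivity)
  have h3 : (ascPochhammer ℝ n).eval ((k:ℝ) + 1) = (k + 1) * (ascPochhammer ℝ n).eval ((k:ℝ) + 2) / (k + 1 + n) := by
    rw [eq_div_iff (by positivity)]; exact h1
  rw [h3, ← neg_mul, mul_pow]
  push_cast
  have h4 : (k:ℝ) + 1 + n ≠ 0 := by positivity
  have h5 : (k:ℝ) + n + 1 ≠ 0 := by positivity
  field_simp
  simp
  ring

lemma hasDerivAt_cdf (m : ℕ) (a x : ℝ) :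
    HasDerivAt (fun x => - (Real.exp (-a * x) * ∑ k ∈ Finset.range (m + 1), (a * x) ^ k / (Nat.factorial k : ℝ)))
      (a * (a * x) ^ m / (Nat.factorial m : ℝ) * Real.exp (-a * x)) x := by
  have he : HasDerivAt (fun x => Real.exp (-a * x)) (Real.exp (-a * x) * (-a)) x := by
    simpa using ((hasDerivAt_id x).const_mul (-a)).exp
  have hl : HasDerivAt (fun x => a * x) a x := by simpa using (hasDerivAt_id x).const_mul a
  induction m with
  | zero => 
    have h2 : HasDerivAt (fun x => - Real.exp (-a * x)) (-(Real.exp (-a * x) * (-a))) x := he.neg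
    have e : -(Real.exp (-a * x) * (-a)) = a * Real.exp (-a * x) := by ring
    rw [e] at h2
    simpa using h2
  | succ m ih =>
    have h2 := ih.sub (he.mul ((hl.pow (m + 1)).div_const (Nat.factorial (m + 1) : ℝ)))
    convert! h2 using 1
    · ext y
      rw [Finset.sum_range_succ]; simp; ring
    · have : (Nat.factorial (m + 1) : ℝ) = (m + 1) * Nat.factorial m := by
        rw [Nat.factorial_succ]; push_cast; ring
      rw [this]
      simp
      field_simp
      ring

lemma fG_cdf (m : ℕ) (hm : 0 < m) (X : ℝ) (hX : 0 ≤ X) :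
    ∫ y in Set.Ioo 0 X, fG (m : ℝ) y =
      1 - Real.exp (-(m:ℝ) * X) * ∑ k ∈ Finset.range m, ((m:ℝ) * X) ^ k / (Nat.factorial k : ℝ) := by
  obtain ⟨n, rfl⟩ : ∃ n, m = n + 1 := ⟨m - 1, by omega⟩
  set a : ℝ := ((n + 1 : ℕ) : ℝ) with ha
  have hapos : 0 < a := by positivity
  have h1 : ∫ y in Set.Ioo 0 X, fG a y =
      ∫ y in Set.Ioo 0 X, a * (a * y) ^ n / (Nat.factorial n : ℝ) * Real.exp (-a * y) := by
    refine setIntegral_congr_fun measurableSet_Ioo fun y hy => ?_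
    have hy0 : 0 < y := hy.1
    have hG : Real.Gamma a = (Nat.factorial n : ℝ) := by
      rw [ha]; push_cast; exact Real.Gamma_nat_eq_factorial n
    have e1 : a ^ a = a * a ^ n := by
      conv_lhs => rw [ha]
      rw [← ha, Real.rpow_natCast, pow_succ]; ring
    have e2 : y ^ (a - 1) = y ^ n := by
      have : a - 1 = (n : ℝ) := by rw [ha]; push_cast; ring
      rw [this, Real.rpow_natCast]
    simp only [fG, if_pos hy0]
    rw [hG, e1, e2, mul_pow]
    ring
  rw [h1, ← MeasureTheory.integral_Ioc_eq_integral_Ioo, ← intervalIntegral.integral_of_le hX,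
    intervalIntegral.integral_eq_sub_of_hasDerivAt (fun x _ => hasDerivAt_cdf n a x)
      (Continuous.intervalIntegrable (by fun_prop) _ _)]
  simp [Finset.sum_range_succ']
  ring

lemma gam_int (a r : ℝ) (ha : 0 < a) (hr : 0 < r) :
    IntegrableOn (fun x : ℝ => x ^ (a - 1) * Real.exp (-(r * x))) (Set.Ioi 0) := by
  have := integrableOn_rpow_mul_exp_neg_mul_rpow (p := 1) (s := a - 1) (b := r) (by linarith) one_pos hr
  simpa using this

lemma O_NN_eq (m : ℕ) (hm : 0 < m) (m' β : ℝ) (hm' : 0 < m') (hβ : 0 ≤ β) :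
    O_NN m m' β = 1 - m' ^ m' / Real.Gamma m' * ∑ k ∈ Finset.range m,
      ((m:ℝ) * β) ^ k / (Nat.factorial k : ℝ) *
        ((1 / (m' + m * β)) ^ ((k:ℝ) + m') * Real.Gamma ((k:ℝ) + m')) := by
  have hG := Real.Gamma_pos_of_pos hm'
  have h1 : O_NN m m' β = ∫ x in Set.Ioi (0:ℝ),
      (m' ^ m' / Real.Gamma m' * (x ^ (m' - 1) * Real.exp (-(m' * x))) -
       m' ^ m' / Real.Gamma m' * ∑ k ∈ Finset.range m, ((m:ℝ) * β) ^ k / (Nat.factorial k : ℝ) *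
        (x ^ ((k:ℝ) + m' - 1) * Real.exp (-((m' + m * β) * x)))) := by
    refine setIntegral_congr_fun measurableSet_Ioi fun x hx => ?_
    have hx0 : 0 < x := hx
    rw [fG_cdf m hm (β * x) (by positivity), fG, if_pos hx0, mul_sub, Finset.mul_sum, Finset.mul_sum,
      Finset.mul_sum]
    congr 1
    · ring_nf
    · refine Finset.sum_congr rfl fun k _ => ?_
      have e1 : x ^ ((k:ℝ) + m' - 1) = x ^ k * x ^ (m' - 1) := by
        rw [← Real.rpow_natCast x k, ← Real.rpow_add hx0]; ring_nf
      have e2 : Real.exp (-((m' + m * β) * x)) = Real.exp (-m' * x) * Real.exp (-(m:ℝ) * (β * x)) := by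
        rw [← Real.exp_add]; ring_nf
      rw [e1, e2, ← mul_assoc (m:ℝ) β x, mul_pow _ x]
      ring
  have hr : 0 < m' + m * β := by positivity
  have hi : ∀ k ∈ Finset.range m, Integrable (fun x : ℝ => ((m:ℝ) * β) ^ k / (Nat.factorial k : ℝ) *
        (x ^ ((k:ℝ) + m' - 1) * Real.exp (-((m' + m * β) * x)))) (volume.restrict (Set.Ioi 0)) :=
    fun k _ => (gam_int ((k:ℝ) + m') _ (by positivity) hr).const_mul _
  rw [h1, MeasureTheory.integral_sub ((gam_int m' m' hm' hm').const_mul _)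
    ((integrable_finsetSum _ hi).const_mul _), MeasureTheory.integral_const_mul,
    MeasureTheory.integral_const_mul, MeasureTheory.integral_finsetSum _ hi,
    Real.integral_rpow_mul_exp_neg_mul_Ioi hm' hm']
  congr 1
  · rw [Real.div_rpow zero_le_one hm'.le, Real.one_rpow]
    have := Real.rpow_pos_of_pos hm' m'
    field_simp
  · congr 1
    refine Finset.sum_congr rfl fun k _ => ?_
    rw [MeasureTheory.integral_const_mul, Real.integral_rpow_mul_exp_neg_mul_Ioi (by positivity) hr]

/-- Theorem 1, closed form of `H_N(α, γ) = ∫₀^γ O_{N,N}(α t) dt` (NLoS interference case). -/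
theorem H_N_closed_form
    (m : ℕ) (hm : 0 < m) (m' α γ : ℝ) (hm' : 0 < m') (hα : 0 < α) (hγ : 0 < γ)
    (hlt : (m : ℝ) * α * γ < m') :
    (∫ t in (0 : ℝ)..γ, O_NN m m' (α * t)) =
      γ - (m' ^ m' / Real.Gamma m') *
        ∑ k ∈ Finset.range m,
          (Real.Gamma ((k : ℝ) + m') * ((m : ℝ) * α) ^ k * γ ^ (k + 1) /
              ((Nat.factorial (k + 1) : ℝ) * m' ^ ((k : ℝ) + m'))) *
            hyp2F1 ((k : ℝ) + 1) ((k : ℝ) + m') ((k : ℝ) + 2) (-((m : ℝ) * α * γ) / m') := by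
  have hcont : ∀ k ∈ Finset.range m, IntervalIntegrable (fun t : ℝ =>
      ((m:ℝ) * α) ^ k / (Nat.factorial k : ℝ) * (Real.Gamma ((k:ℝ) + m') / m' ^ ((k:ℝ) + m')) *
        (t ^ k * (1 / (1 + (m * α / m') * t) ^ ((k:ℝ) + m')))) volume 0 γ := by
    intro k _
    apply ContinuousOn.intervalIntegrable
    rw [Set.uIcc_of_le hγ.le]
    have hp : ∀ t ∈ Set.Icc 0 γ, 0 < 1 + (m * α / m') * t := fun t ht => by
      have := ht.1; positivity
    refine ContinuousOn.mul (by fun_prop) (ContinuousOn.mul (by fun_prop) ?_)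
    refine ContinuousOn.div (by fun_prop) ?_ fun t ht => (Real.rpow_pos_of_pos (hp t ht) _).ne'
    exact ContinuousOn.rpow_const (by fun_prop) fun t ht => Or.inl (hp t ht).ne'
  have h1 : (∫ t in (0 : ℝ)..γ, O_NN m m' (α * t)) = ∫ t in (0:ℝ)..γ,
      (1 - m' ^ m' / Real.Gamma m' * ∑ k ∈ Finset.range m,
      ((m:ℝ) * α) ^ k / (Nat.factorial k : ℝ) * (Real.Gamma ((k:ℝ) + m') / m' ^ ((k:ℝ) + m')) *
        (t ^ k * (1 / (1 + (m * α / m') * t) ^ ((k:ℝ) + m')))) := by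
    refine intervalIntegral.integral_congr fun t ht => ?_
    rw [Set.uIcc_of_le hγ.le] at ht
    have ht0 := ht.1
    rw [O_NN_eq m hm m' (α * t) hm' (by positivity)]
    congr 2
    refine Finset.sum_congr rfl fun k _ => ?_
    have e : m' + m * (α * t) = m' * (1 + (m * α / m') * t) := by field_simp
    rw [e, Real.div_rpow zero_le_one (by positivity), Real.one_rpow,
      Real.mul_rpow hm'.le (by positivity), ← mul_assoc (m:ℝ) α t, mul_pow _ t]
    field_simp
  have hm0 : (0:ℝ) < m := by exact_mod_cast hm
  have hsum := IntervalIntegrable.sum (Finset.range m) hcont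
  rw [h1, intervalIntegral.integral_sub intervalIntegrable_const (by
      convert hsum.const_mul (m' ^ m' / Real.Gamma m') using 2; simp),
    intervalIntegral.integral_const_mul, intervalIntegral.integral_finsetSum hcont]
  congr 1
  · simp
  · congr 1
    refine Finset.sum_congr rfl fun k _ => ?_
    rw [intervalIntegral.integral_const_mul, integral_hyp k _ _ γ (by positivity) (by positivity) hγ
      (by rw [div_mul_eq_mul_div, div_lt_one hm']; exact hlt)]
    have e : -(m * α / m' * γ) = -((m : ℝ) * α * γ) / m' := by ring
    rw [e, Nat.factorial_succ]
    push_cast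
    field_simp
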